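/- (Data confidentiality of offers in P1, pro_notin_spies.) If evs ∈ p1, the event pro B ofr A r I L J C occurs in evs, A ∉ bad and B ∉ bad, then Nonce ofr ∉ analz (spies evs); i.e. the spy cannot obtain an offer made by an honest shop for an honest owner's agent. -/

import Mathlib

inductive agent : Type
  | Server : agent
  | Friend : ℕ → agent
  | Spy : agent
deriving DecidableEq

inductive msg : Type
  | Agent : agent → msg
  | Number : ℕ → msg
  | Nonce : ℕ → msg
  | Key : ℕ → msg
  | Hash : msg → msg
  | MPair : msg → msg → msg
  | Crypt : ℕ → msg → msg
deriving DecidableEq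

inductive partsP (H : Set msg) : msg → Prop
  | Inj : ∀ X, X ∈ H → partsP H X
  | Fst : ∀ X Y, partsP H (msg.MPair X Y) → partsP H X
  | Snd : ∀ X Y, partsP H (msg.MPair X Y) → partsP H Y
  | Body : ∀ K X, partsP H (msg.Crypt K X) → partsP H X

/-- `parts H`: sub-components of messages of `H`. -/
def parts (H : Set msg) : Set msg := {X | partsP H X}

inductive analzP (invKey : ℕ → ℕ) (H : Set msg) : msg → Prop
  | Inj : ∀ X, X ∈ H → analzP invKey H X
  | Fst : ∀ X Y, analzP invKey H (msg.MPair X Y) → analzP invKey H X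
  | Snd : ∀ X Y, analzP invKey H (msg.MPair X Y) → analzP invKey H Y
  | Decrypt : ∀ K X, analzP invKey H (msg.Crypt K X) →
      analzP invKey H (msg.Key (invKey K)) → analzP invKey H X

/-- `analz invKey H`: what can be obtained by decomposing and decrypting messages of `H`. -/
def analz (invKey : ℕ → ℕ) (H : Set msg) : Set msg := {X | analzP invKey H X}

inductive synthP (H : Set msg) : msg → Prop
  | Inj : ∀ X, X ∈ H → synthP H X
  | Ag : ∀ a, synthP H (msg.Agent a)
  | Num : ∀ n, synthP H (msg.Number n)
  | Hsh : ∀ X, synthP H X → synthP H (msg.Hash X)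
  | Pr : ∀ X Y, synthP H X → synthP H Y → synthP H (msg.MPair X Y)
  | Cry : ∀ K X, synthP H X → msg.Key K ∈ H → synthP H (msg.Crypt K X)

/-- `synth H`: messages that can be synthesized from `H`. -/
def synth (H : Set msg) : Set msg := {X | synthP H X}

inductive guardP (invKey : ℕ → ℕ) (n : ℕ) (Ks : Set ℕ) : msg → Prop
  | No_Nonce : ∀ X, msg.Nonce n ∉ parts {X} → guardP invKey n Ks X
  | Guard : ∀ K X, invKey K ∈ Ks → guardP invKey n Ks (msg.Crypt K X)
  | Cry : ∀ K X, guardP invKey n Ks X → guardP invKey n Ks (msg.Crypt K X)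
  | Pr : ∀ X Y, guardP invKey n Ks X → guardP invKey n Ks Y →
      guardP invKey n Ks (msg.MPair X Y)

/-- `guard n Ks`: messages in which `Nonce n` is guarded by the keys of `Ks`. -/
def guardMsg (invKey : ℕ → ℕ) (n : ℕ) (Ks : Set ℕ) : Set msg := {X | guardP invKey n Ks X}

/-- `Guard n Ks H`: every message of `H` lies in `guard n Ks`. -/
def Guard (invKey : ℕ → ℕ) (n : ℕ) (Ks : Set ℕ) (H : Set msg) : Prop :=
  ∀ X ∈ H, X ∈ guardMsg invKey n Ks
inductive event : Type
  | Says : agent → agent → msg → event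
deriving DecidableEq

def msgOf : event → msg
  | event.Says _ _ X => X

/-- Set of messages sent in a trace. -/
def sent (evs : List event) : Set msg :=
  {X | ∃ A B, event.Says A B X ∈ evs}
/-- Private key of an agent: the inverse of its public key. -/
def priK (invKey : ℕ → ℕ) (pubK : agent → ℕ) (A : agent) : ℕ := invKey (pubK A)

/-- Initial knowledge of each agent in a public-key infrastructure:
every agent knows its own private key and all public keys; the spy moreover
knows the private keys of the bad agents. -/
def initStatePK (invKey : ℕ → ℕ) (pubK : agent → ℕ) (bad : Set agent) : agent → Set msg :=
  fun A =>
    match A with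
    | agent.Spy =>
        {X | ∃ B ∈ bad, X = msg.Key (priK invKey pubK B)} ∪ {X | ∃ B, X = msg.Key (pubK B)}
    | _ => {msg.Key (priK invKey pubK A)} ∪ {X | ∃ B, X = msg.Key (pubK B)}

/-- `spies evs`: the private keys of the bad agents, all public keys, and
every message sent in `evs`. -/
def spiesPK (invKey : ℕ → ℕ) (pubK : agent → ℕ) (bad : Set agent) (evs : List event) :
    Set msg :=
  initStatePK invKey pubK bad agent.Spy ∪ sent evs

/-- `used evs`: parts of all agents' initial knowledge and of all messages sent in `evs`. -/
def usedPK (invKey : ℕ → ℕ) (pubK : agent → ℕ) (bad : Set agent) (evs : List event) :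
    Set msg :=
  parts ((⋃ A, initStatePK invKey pubK bad A) ∪ sent evs)
/-- The empty encoded list: a fixed atomic message. -/
def nilm : msg := msg.Number 0

/-- Cons on encoded lists. -/
def consm (X L : msg) : msg := msg.MPair X L

/-- Head of an encoded list. -/
def headm : msg → msg
  | msg.MPair X _ => X
  | _ => nilm

/-- Tail of an encoded list. -/
def tailm : msg → msg
  | msg.MPair _ L => L
  | _ => nilm

/-- Length of an encoded list. -/
def lenm : msg → ℕ
  | msg.MPair _ L => lenm L + 1
  | _ => 0

/-- `ith L i` is the `i+1`-th element of `L`. -/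
def ith : msg → ℕ → msg
  | L, 0 => headm L
  | L, i + 1 => ith (tailm L) i

/-- `repl L i M` is `L` with its `i+1`-th element replaced by `M`. -/
def repl : msg → ℕ → msg → msg
  | msg.MPair _ L, 0, M => msg.MPair M L
  | msg.MPair X L, i + 1, M => msg.MPair X (repl L i M)
  | L, _, _ => L

/-- `insm L i M` is `L` with `M` inserted before the `i+1`-th element of `L`. -/
def insm : msg → ℕ → msg → msg
  | L, 0, M => msg.MPair M L
  | msg.MPair X L, i + 1, M => msg.MPair X (insm L i M)
  | L, _, _ => L

/-- `trunc L i` truncates the `i` first elements of `L`. -/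
def trunc : msg → ℕ → msg
  | L, 0 => L
  | msg.MPair _ L, i + 1 => trunc L i
  | L, _ => L
/-- `sign B X = ⟨Agent B, X, Crypt (priK B) (Hash X)⟩`. -/
def sign (invKey : ℕ → ℕ) (pubK : agent → ℕ) (B : agent) (X : msg) : msg :=
  msg.MPair (msg.Agent B) (msg.MPair X (msg.Crypt (invKey (pubK B)) (msg.Hash X)))

/-- The chaining relation of protocol P1. -/
def chain (invKey : ℕ → ℕ) (pubK : agent → ℕ) (B : agent) (ofr : ℕ) (A : agent)
    (L : msg) (C : agent) : msg :=
  sign invKey pubK B (msg.MPair (msg.Crypt (pubK A) (msg.Nonce ofr))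
    (msg.Hash (msg.MPair (headm L) (msg.Agent C))))

/-- The start of the chaining relation. -/
def anchor (invKey : ℕ → ℕ) (pubK : agent → ℕ) (A : agent) (n : ℕ) (B : agent) : msg :=
  chain invKey pubK A n A (consm nilm nilm) B

/-- The signer of an offer `chain B ofr A L C`, i.e. `Agent B`. -/
def shop (M : msg) : msg := headm M

/-- The designated next server of an offer `chain B ofr A L C`, i.e. `C`. -/
def next_shop : msg → agent
  | msg.MPair _ (msg.MPair (msg.MPair _ (msg.Hash (msg.MPair _ (msg.Agent C)))) _) => C
  | _ => agent.Server
/-- Messages encoding lists of agent names. -/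
inductive aglP : msg → Prop
  | Nil : aglP nilm
  | Cons : ∀ a I, aglP I → aglP (consm (msg.Agent a) I)

def agl : Set msg := {I | aglP I}

/-- Append of encoded lists. -/
def appm : msg → msg → msg
  | msg.MPair X L, I => msg.MPair X (appm L I)
  | _, I => I

/-- `delm a I` removes the first occurrence of `a` from the encoded list `I`. -/
def delm (a : msg) : msg → msg
  | msg.MPair X L => if X = a then L else msg.MPair X (delm a L)
  | L => L

/-- `isin a I` means that `a` occurs in the encoded list `I`. -/
def isin (a : msg) : msg → Prop
  | msg.MPair X L => X = a ∨ isin a L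
  | _ => False

/-- The request message of P1. -/
def reqm (invKey : ℕ → ℕ) (pubK : agent → ℕ) (A : agent) (r n : ℕ) (I : msg) (B : agent) :
    msg :=
  msg.MPair (msg.Agent A) (msg.MPair (msg.Number r)
    (msg.MPair (consm (msg.Agent A) (consm (msg.Agent B) I))
      (consm (anchor invKey pubK A n B) nilm)))

/-- The proposition message of P1. -/
def prom (invKey : ℕ → ℕ) (pubK : agent → ℕ) (B : agent) (ofr : ℕ) (A : agent) (r : ℕ)
    (I L J : msg) (C : agent) : msg :=
  msg.MPair (msg.Agent A) (msg.MPair (msg.Number r)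
    (msg.MPair (appm J (delm (msg.Agent B) I))
      (consm (chain invKey pubK B ofr A L C) L)))

/-- The request event of P1. -/
def req (invKey : ℕ → ℕ) (pubK : agent → ℕ) (A : agent) (r n : ℕ) (I : msg) (B : agent) :
    event :=
  event.Says A B (reqm invKey pubK A r n I B)

/-- The proposition event of P1. -/
def pro (invKey : ℕ → ℕ) (pubK : agent → ℕ) (B : agent) (ofr : ℕ) (A : agent) (r : ℕ)
    (I L J : msg) (C : agent) : event :=
  event.Says B C (prom invKey pubK B ofr A r I L J C)

/-- The protocol P1. -/
inductive p1 (invKey : ℕ → ℕ) (pubK : agent → ℕ) (bad : Set agent) : List event → Prop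
  | Nil : p1 invKey pubK bad []
  | Fake : ∀ evs B X, p1 invKey pubK bad evs →
      X ∈ synth (analz invKey (spiesPK invKey pubK bad evs)) →
      p1 invKey pubK bad (event.Says agent.Spy B X :: evs)
  | Req : ∀ evs A B r n I, p1 invKey pubK bad evs →
      msg.Nonce n ∉ usedPK invKey pubK bad evs → I ∈ agl →
      p1 invKey pubK bad (req invKey pubK A r n I B :: evs)
  | Prop : ∀ evs A A' B C r ofr I L J, p1 invKey pubK bad evs →
      I ∈ agl → J ∈ agl →
      event.Says A' B (msg.MPair (msg.Agent A)
        (msg.MPair (msg.Number r) (msg.MPair I L))) ∈ evs →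
      isin (msg.Agent C) (appm J (delm (msg.Agent B) I)) →
      msg.Nonce ofr ∉ usedPK invKey pubK bad evs →
      p1 invKey pubK bad (pro invKey pubK B ofr A r I L J C :: evs)

/-- Messages protecting the nonces in `N` and the key `inv k0` by encryption under `k0`. -/
def GG (k0 k1 : ℕ) (N : ℕ → Prop) : msg → Prop
  | msg.Agent _ => True
  | msg.Number _ => True
  | msg.Nonce m => ¬ N m
  | msg.Key k => k ≠ k1
  | msg.Hash _ => True
  | msg.MPair X Y => GG k0 k1 N X ∧ GG k0 k1 N Y
  | msg.Crypt K X => K = k0 ∨ GG k0 k1 N X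

theorem GG_analz (invKey : ℕ → ℕ) (k0 : ℕ) (N : ℕ → Prop) (H : Set msg)
    (hH : ∀ X ∈ H, GG k0 (invKey k0) N X) :
    ∀ X, analzP invKey H X → GG k0 (invKey k0) N X := by
  intro X hX
  induction hX with
  | Inj X h => exact hH X h
  | Fst X Y _ ih => exact ih.1
  | Snd X Y _ ih => exact ih.2
  | Decrypt K X _ _ ih1 ih2 =>
    rcases ih1 with h | h
    · subst h; exact absurd rfl ih2
    · exact h

theorem GG_synth (k0 k1 : ℕ) (N : ℕ → Prop) (H : Set msg)
    (hH : ∀ X ∈ H, GG k0 k1 N X) :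
    ∀ X, synthP H X → GG k0 k1 N X := by
  intro X hX
  induction hX with
  | Inj X h => exact hH X h
  | Ag a => trivial
  | Num n => trivial
  | Hsh X _ _ => trivial
  | Pr X Y _ _ ih1 ih2 => exact ⟨ih1, ih2⟩
  | Cry K X _ _ ih => exact Or.inr ih

theorem GG_agl (k0 k1 : ℕ) (N : ℕ → Prop) (I : msg) (h : aglP I) : GG k0 k1 N I := by
  induction h with
  | Nil => trivial
  | Cons a I _ ih => exact ⟨trivial, ih⟩

theorem GG_app (k0 k1 : ℕ) (N : ℕ → Prop) (J I : msg) (hJ : aglP J)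
    (hI : GG k0 k1 N I) : GG k0 k1 N (appm J I) := by
  induction hJ with
  | Nil => simpa [nilm, appm] using hI
  | Cons a J _ ih => exact ⟨trivial, ih⟩

theorem GG_del (k0 k1 : ℕ) (N : ℕ → Prop) (a I : msg) (hI : aglP I) :
    GG k0 k1 N (delm a I) := by
  induction hI with
  | Nil => trivial
  | Cons b J hJ ih =>
    unfold consm delm
    split
    · exact GG_agl _ _ _ _ hJ
    · exact ⟨trivial, ih⟩

theorem GG_chain (invKey : ℕ → ℕ) (pubK : agent → ℕ) (k0 k1 : ℕ) (N : ℕ → Prop)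
    (B : agent) (ofr : ℕ) (A : agent) (L : msg) (C : agent)
    (h : pubK A = k0 ∨ ¬ N ofr) : GG k0 k1 N (chain invKey pubK B ofr A L C) :=
  ⟨trivial, ⟨h, trivial⟩, Or.inr trivial⟩

theorem GG_prom (invKey : ℕ → ℕ) (pubK : agent → ℕ) (k0 k1 : ℕ) (N : ℕ → Prop)
    (B : agent) (ofr : ℕ) (A : agent) (r : ℕ) (I L J : msg) (C : agent)
    (h : pubK A = k0 ∨ ¬ N ofr) (hI : aglP I) (hJ : aglP J) (hL : GG k0 k1 N L) :
    GG k0 k1 N (prom invKey pubK B ofr A r I L J C) :=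
  ⟨trivial, trivial, GG_app _ _ _ _ _ hJ (GG_del _ _ _ _ _ hI),
    GG_chain _ _ _ _ _ _ _ _ _ _ h, hL⟩

theorem GG_reqm (invKey : ℕ → ℕ) (pubK : agent → ℕ) (k0 k1 : ℕ) (N : ℕ → Prop)
    (A : agent) (r n : ℕ) (I : msg) (B : agent)
    (h : pubK A = k0 ∨ ¬ N n) (hI : aglP I) :
    GG k0 k1 N (reqm invKey pubK A r n I B) :=
  ⟨trivial, trivial, ⟨trivial, trivial, GG_agl _ _ _ _ hI⟩,
    GG_chain _ _ _ _ _ _ _ _ _ _ h, trivial⟩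

theorem GG_init (invKey : ℕ → ℕ) (pubK : agent → ℕ) (bad : Set agent)
    (hpri : Function.Injective (priK invKey pubK))
    (hpubpri : ∀ A B : agent, pubK A ≠ priK invKey pubK B)
    (A : agent) (hA : A ∉ bad) (N : ℕ → Prop) (evs : List event)
    (h : ∀ X ∈ sent evs, GG (pubK A) (invKey (pubK A)) N X) :
    ∀ X ∈ spiesPK invKey pubK bad evs, GG (pubK A) (invKey (pubK A)) N X := by
  intro X hX
  rcases hX with (⟨B, hB, rfl⟩ | ⟨B, rfl⟩) | hX
  · intro e
    exact hA (hpri (a₁ := B) (a₂ := A) e ▸ hB)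
  · exact hpubpri B A
  · exact h X hX

theorem sent_cons (P : msg → Prop) (S R : agent) (X : msg) (evs : List event)
    (hX : P X) (h : ∀ Y ∈ sent evs, P Y) : ∀ Y ∈ sent (event.Says S R X :: evs), P Y := by
  rintro Y ⟨S', R', hY⟩
  rcases List.mem_cons.1 hY with e | hY
  · injection e with _ _ e; exact e ▸ hX
  · exact h Y ⟨S', R', hY⟩

theorem GG_fake (invKey : ℕ → ℕ) (pubK : agent → ℕ) (bad : Set agent)
    (hpri : Function.Injective (priK invKey pubK))
    (hpubpri : ∀ A B : agent, pubK A ≠ priK invKey pubK B)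
    (A : agent) (hA : A ∉ bad) (N : ℕ → Prop) (evs : List event)
    (h : ∀ X ∈ sent evs, GG (pubK A) (invKey (pubK A)) N X) (X : msg)
    (hX : X ∈ synth (analz invKey (spiesPK invKey pubK bad evs))) :
    GG (pubK A) (invKey (pubK A)) N X :=
  GG_synth _ _ _ _ (GG_analz _ _ _ _ (GG_init _ _ _ hpri hpubpri A hA N evs h)) X hX

/-- Stage 1: the private key of an honest agent is never sent in the clear. -/
theorem GG_keys (invKey : ℕ → ℕ) (pubK : agent → ℕ) (bad : Set agent)
    (hpri : Function.Injective (priK invKey pubK))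
    (hpubpri : ∀ A B : agent, pubK A ≠ priK invKey pubK B)
    (A : agent) (hA : A ∉ bad) (evs : List event) (hevs : p1 invKey pubK bad evs) :
    ∀ X ∈ sent evs, GG (pubK A) (invKey (pubK A)) (fun _ => False) X := by
  induction hevs with
  | Nil => rintro X ⟨_, _, h⟩; simp at h
  | Fake evs B X _ hX ih =>
    exact sent_cons _ _ _ _ _ (GG_fake _ _ _ hpri hpubpri A hA _ evs ih X hX) ih
  | Req evs A' B r n I _ _ hI ih =>
    exact sent_cons _ _ _ _ _ (GG_reqm _ _ _ _ _ _ _ _ _ _ (Or.inr id) hI) ih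
  | _ =>
    rename_i evs A1 A' B C r ofr I L J _ hI hJ hs _ _ ih
    exact sent_cons _ _ _ _ _
      (GG_prom _ _ _ _ _ _ _ _ _ _ _ _ _ (Or.inr id) hI hJ (ih _ ⟨_, _, hs⟩).2.2.2) ih

theorem GG_fresh (k0 k1 n : ℕ) (H : Set msg) (hn : ¬ partsP H (msg.Nonce n)) (X : msg) :
    partsP H X → GG k0 k1 (fun _ => False) X → GG k0 k1 (fun m => m = n) X := by
  induction X with
  | Nonce m => rintro h _ rfl; exact hn h
  | MPair X Y ihX ihY =>
    exact fun h g => ⟨ihX (.Fst _ _ h) g.1, ihY (.Snd _ _ h) g.2⟩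
  | Crypt K X ih => exact fun h g => g.imp id (ih (.Body _ _ h))
  | Key k => exact fun _ g => g
  | _ => exact fun _ _ => trivial

theorem GG_fresh_sent (invKey : ℕ → ℕ) (pubK : agent → ℕ) (bad : Set agent)
    (hpri : Function.Injective (priK invKey pubK))
    (hpubpri : ∀ A B : agent, pubK A ≠ priK invKey pubK B)
    (A : agent) (hA : A ∉ bad) (evs : List event) (hevs : p1 invKey pubK bad evs)
    (n : ℕ) (hn : msg.Nonce n ∉ usedPK invKey pubK bad evs) :
    ∀ X ∈ sent evs, GG (pubK A) (invKey (pubK A)) (fun m => m = n) X :=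
  fun X hX => GG_fresh _ _ n _ hn X (.Inj _ (Or.inr hX))
    (GG_keys _ _ _ hpri hpubpri A hA evs hevs X hX)

theorem used_of_pro (invKey : ℕ → ℕ) (pubK : agent → ℕ) (bad : Set agent)
    (evs : List event) (A B C : agent) (r ofr : ℕ) (I L J : msg)
    (hpro : pro invKey pubK B ofr A r I L J C ∈ evs) :
    msg.Nonce ofr ∈ usedPK invKey pubK bad evs := by
  have h : partsP ((⋃ A, initStatePK invKey pubK bad A) ∪ sent evs)
      (prom invKey pubK B ofr A r I L J C) := .Inj _ (Or.inr ⟨_, _, hpro⟩)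
  exact .Body _ _ (.Fst _ _ (.Fst _ _ (.Snd _ _ (.Fst _ _ (.Snd _ _ (.Snd _ _ (.Snd _ _ h)))))))

/-- Stage 2: the offer stays guarded. -/
theorem GG_pro (invKey : ℕ → ℕ) (pubK : agent → ℕ) (bad : Set agent)
    (hpub : Function.Injective pubK)
    (hpri : Function.Injective (priK invKey pubK))
    (hpubpri : ∀ A B : agent, pubK A ≠ priK invKey pubK B)
    (hspy : agent.Spy ∈ bad)
    (evs : List event) (A B C : agent) (r ofr : ℕ) (I L J : msg)
    (hevs : p1 invKey pubK bad evs)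
    (hA : A ∉ bad) (hB : B ∉ bad)
    (hpro : pro invKey pubK B ofr A r I L J C ∈ evs) :
    ∀ X ∈ sent evs, GG (pubK A) (invKey (pubK A)) (fun m => m = ofr) X := by
  induction hevs with
  | Nil => simp at hpro
  | Fake evs B' X _ hX ih =>
    rcases List.mem_cons.1 hpro with e | h
    · injection e with e _ _
      exact absurd (e ▸ hspy) hB
    · exact sent_cons _ _ _ _ _ (GG_fake _ _ _ hpri hpubpri A hA _ evs (ih h) X hX) (ih h)
  | Req evs A' B' r' n I' hp hn hI ih =>
    rcases List.mem_cons.1 hpro with e | h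
    · simp only [pro, req, prom, reqm, consm, anchor, chain, sign, event.Says.injEq,
        msg.MPair.injEq, msg.Crypt.injEq, msg.Nonce.injEq, msg.Agent.injEq] at e
      have e1 : A = A' := by tauto
      have e2 : ofr = n := by tauto
      subst e1 e2
      exact sent_cons _ _ _ _ _ (GG_reqm _ _ _ _ _ _ _ _ _ _ (Or.inl rfl) hI)
        (GG_fresh_sent _ _ _ hpri hpubpri A hA evs hp _ hn)
    · refine sent_cons _ _ _ _ _ (GG_reqm _ _ _ _ _ _ _ _ _ _ (Or.inr ?_) hI) (ih h)
      rintro rfl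
      exact hn (used_of_pro _ _ _ _ _ _ _ _ _ _ _ _ h)
  | _ =>
    rename_i evs A1 A' B' C' r' n I' L' J' hp hI hJ hs _ hn ih
    rcases List.mem_cons.1 hpro with e | h
    · simp only [pro, prom, consm, chain, sign, event.Says.injEq,
        msg.MPair.injEq, msg.Crypt.injEq, msg.Nonce.injEq, msg.Agent.injEq] at e
      have e1 : A = A1 := by tauto
      have e2 : ofr = n := by tauto
      subst e1 e2
      have hf := GG_fresh_sent _ _ _ hpri hpubpri A hA evs hp _ hn
      exact sent_cons _ _ _ _ _
        (GG_prom _ _ _ _ _ _ _ _ _ _ _ _ _ (Or.inl rfl) hI hJ (hf _ ⟨_, _, hs⟩).2.2.2) hf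
    · refine sent_cons _ _ _ _ _
        (GG_prom _ _ _ _ _ _ _ _ _ _ _ _ _ (Or.inr ?_) hI hJ (ih h _ ⟨_, _, hs⟩).2.2.2) (ih h)
      rintro rfl
      exact hn (used_of_pro _ _ _ _ _ _ _ _ _ _ _ _ h)

/-- Data confidentiality of offers in P1 (`pro_notin_spies`): the spy cannot
obtain an offer made by an honest shop for an honest owner's agent. -/
theorem pro_notin_spies
    (invKey : ℕ → ℕ) (pubK : agent → ℕ) (bad : Set agent)
    (hinv : ∀ K, invKey (invKey K) = K)
    (hpub : Function.Injective pubK)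
    (hpri : Function.Injective (priK invKey pubK))
    (hpubpri : ∀ A B : agent, pubK A ≠ priK invKey pubK B)
    (hspy : agent.Spy ∈ bad)
    (evs : List event) (A B C : agent) (r ofr : ℕ) (I L J : msg)
    (hevs : p1 invKey pubK bad evs)
    (hpro : pro invKey pubK B ofr A r I L J C ∈ evs)
    (hA : A ∉ bad) (hB : B ∉ bad) :
    msg.Nonce ofr ∉ analz invKey (spiesPK invKey pubK bad evs) := by
  intro hmem
  exact GG_analz invKey (pubK A) (fun m => m = ofr) _
    (GG_init _ _ _ hpri hpubpri A hA _ evs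
      (GG_pro _ _ _ hpub hpri hpubpri hspy evs A B C r ofr I L J hevs hA hB hpro)) _ hmem rfl
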